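/- Let X ⊂ ℝⁿ, α ∈ (0,∞) and x ∈ ℝⁿ with Θ_*^α(X,x) > 0. Then there exist ρ > 0 and a map s : (0,ρ) → 𝕊^{n−1} such that for every ε > 0 there is a constant c(ε) > 0 with c(ε)·r^α ≤ H^α(X ∩ B̄_r(x) ∩ C_{s(r),ε}(x)) for all r ∈ (0,ρ). -/

import Mathlib

open MeasureTheory Metric Set Filter
open scoped ENNReal Topology Classical

noncomputable section

/-- The affine line through `x` and `y`. -/
def lineThrough {n : ℕ} (x y : EuclideanSpace ℝ (Fin n)) : Set (EuclideanSpace ℝ (Fin n)) :=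
  {p | ∃ t : ℝ, p = x + t • (y - x)}

/-- The inverse circumradius `κ(x,y,z)` of a triple of points, set to `0` when the
points are not pairwise distinct. -/
def kappa {n : ℕ} (x y z : EuclideanSpace ℝ (Fin n)) : ℝ≥0∞ :=
  if x ≠ y ∧ y ≠ z ∧ x ≠ z then
    ENNReal.ofReal (2 * Metric.infDist z (lineThrough x y) / (‖x - z‖ * ‖y - z‖))
  else 0

/-- `κ_G(x) = sup_{v,w ∈ X} κ(x,v,w)`. -/
def kappaG {n : ℕ} (X : Set (EuclideanSpace ℝ (Fin n))) (x : EuclideanSpace ℝ (Fin n)) : ℝ≥0∞ :=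
  ⨆ v ∈ X, ⨆ w ∈ X, kappa x v w

/-- `κ_i(x,y) = sup_{z ∈ X} κ(x,y,z)`. -/
def kappaI {n : ℕ} (X : Set (EuclideanSpace ℝ (Fin n))) (x y : EuclideanSpace ℝ (Fin n)) : ℝ≥0∞ :=
  ⨆ z ∈ X, kappa x y z

/-- The energy `U_p^α(X) = ∫_X κ_G(x)^p dH^α(x)`. -/
def energyU {n : ℕ} (p α : ℝ) (X : Set (EuclideanSpace ℝ (Fin n))) : ℝ≥0∞ :=
  ∫⁻ x in X, kappaG X x ^ p ∂ μH[α]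

/-- The energy `I_p^α(X) = ∫_X ∫_X κ_i(x,y)^p dH^α(x) dH^α(y)`. -/
def energyI {n : ℕ} (p α : ℝ) (X : Set (EuclideanSpace ℝ (Fin n))) : ℝ≥0∞ :=
  ∫⁻ y in X, ∫⁻ x in X, kappaI X x y ^ p ∂ μH[α] ∂ μH[α]

/-- The integral Menger curvature `M_p^α(X)`. -/
def energyM {n : ℕ} (p α : ℝ) (X : Set (EuclideanSpace ℝ (Fin n))) : ℝ≥0∞ :=
  ∫⁻ z in X, ∫⁻ y in X, ∫⁻ x in X, kappa x y z ^ p ∂ μH[α] ∂ μH[α] ∂ μH[α]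

/-- The open double cone about `x` in direction `s` with opening angle `ε`. -/
def cone {n : ℕ} (s : EuclideanSpace ℝ (Fin n)) (ε : ℝ) (x : EuclideanSpace ℝ (Fin n)) :
    Set (EuclideanSpace ℝ (Fin n)) :=
  {y | y ≠ x ∧
    min (InnerProductGeometry.angle (y - x) s) (InnerProductGeometry.angle (y - x) (-s)) < ε}

/-- `X` has an approximate `α`-tangent at `x`. -/
def HasApproxTangent {n : ℕ} (α : ℝ) (X : Set (EuclideanSpace ℝ (Fin n)))
    (x : EuclideanSpace ℝ (Fin n)) : Prop :=
  ∃ s : EuclideanSpace ℝ (Fin n), ‖s‖ = 1 ∧ ∀ ε > (0:ℝ),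
    Filter.Tendsto
      (fun r : ℝ => μH[α] ((X \ cone s ε x) ∩ Metric.closedBall x r) / ENNReal.ofReal (2 * r) ^ α)
      (𝓝[>] 0) (𝓝 0)

/-- `X` has a weak approximate `α`-tangent at `x`. -/
def HasWeakApproxTangent {n : ℕ} (α : ℝ) (X : Set (EuclideanSpace ℝ (Fin n)))
    (x : EuclideanSpace ℝ (Fin n)) : Prop :=
  ∃ ρ > (0:ℝ), ∃ s : ℝ → EuclideanSpace ℝ (Fin n), (∀ r ∈ Set.Ioo (0:ℝ) ρ, ‖s r‖ = 1) ∧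
    ∀ ε > (0:ℝ),
      Filter.Tendsto
        (fun r : ℝ =>
          μH[α] ((X \ cone (s r) ε x) ∩ Metric.closedBall x r) / ENNReal.ofReal (2 * r) ^ α)
        (𝓝[>] 0) (𝓝 0)

/-- Lower `α`-density of `X` at `x`. -/
def lowerDensity {n : ℕ} (α : ℝ) (X : Set (EuclideanSpace ℝ (Fin n)))
    (x : EuclideanSpace ℝ (Fin n)) : ℝ≥0∞ :=
  Filter.liminf
    (fun r : ℝ => μH[α] (X ∩ Metric.closedBall x r) / ENNReal.ofReal (2 * r) ^ α) (𝓝[>] 0)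

/-- Upper `α`-density of `X` at `x`. -/
def upperDensity {n : ℕ} (α : ℝ) (X : Set (EuclideanSpace ℝ (Fin n)))
    (x : EuclideanSpace ℝ (Fin n)) : ℝ≥0∞ :=
  Filter.limsup
    (fun r : ℝ => μH[α] (X ∩ Metric.closedBall x r) / ENNReal.ofReal (2 * r) ^ α) (𝓝[>] 0)

/-!
Pushing `μ = H^α`, restricted to `X ∩ B̄_r(x)` and divided by `(2r)^α`, forward along
`y ↦ (y - x) / ‖y - x‖` turns the claim into one about outer measures of mass at least `m > 0` on
the unit sphere: there is a point `s` all of whose balls of radius `ε` have measure at least `c(ε)`,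
where `c` depends on `m` but not on the measure. For each `k`, cover the sphere by finitely many
balls of radius `1 / (k + 1)`, and give these countably many balls positive weights of total less
than `m`. The balls with measure below their weight cannot exhaust the sphere, and any point `s`
outside them works, with `c(ε)` the least weight at a level `k` where `1 / (k + 1) < ε / 2`.
-/

open InnerProductGeometry NormedSpace
open scoped NNReal

section Pigeonhole

variable {S : Type*}

theorem exists_mem_forall_mem_imp_le_outerMeasure {ι : Type*} [Countable ι] (μ : OuterMeasure S)
    {K : Set S} (U : ι → Set S) (w : ι → ℝ≥0∞) (hw : ∑' i, w i < μ K) :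
    ∃ s ∈ K, ∀ i, s ∈ U i → w i ≤ μ (U i) := by
  by_contra! light_of_mem
  have cover : K ⊆ ⋃ i : {i // μ (U i) < w i}, U i := fun s hs ↦
    let ⟨i, hsi, hi⟩ := light_of_mem s hs
    mem_iUnion.2 ⟨⟨i, hi⟩, hsi⟩
  refine hw.not_ge ?_
  calc μ K ≤ μ (⋃ i : {i // μ (U i) < w i}, U i) := measure_mono cover
    _ ≤ ∑' i : {i // μ (U i) < w i}, μ (U i) := measure_iUnion_le _
    _ ≤ ∑' i : {i // μ (U i) < w i}, w i := ENNReal.tsum_le_tsum fun i ↦ i.2.le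
    _ ≤ ∑' i, w i := ENNReal.tsum_comp_le_tsum_of_injective Subtype.val_injective w

theorem exists_pos_forall_exists_mem_le_outerMeasure_ball [PseudoMetricSpace S] {K : Set S}
    (hK : TotallyBounded K) {m : ℝ≥0∞} (hm : m ≠ 0) :
    ∃ c : ℝ → ℝ≥0, (∀ ε, 0 < c ε) ∧ ∀ μ : OuterMeasure S, m ≤ μ K →
      ∃ s ∈ K, ∀ ε > 0, c ε ≤ μ (ball s ε) := by
  choose T T_finite K_subset using fun k : ℕ ↦
    totallyBounded_iff.1 hK (1 / ((k : ℝ) + 1)) Nat.one_div_pos_of_nat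
  have (k : ℕ) : Finite (T k) := T_finite k
  obtain ⟨w, w_pos, tsum_w_lt⟩ := ENNReal.exists_pos_sum_of_countable hm (Σ k, T k)
  have exists_pos_le_w (k : ℕ) : ∃ a > 0, ∀ t : T k, a ≤ w ⟨k, t⟩ := by
    have eventually_le_w : ∀ᶠ a in 𝓝[>] 0, ∀ t : T k, a ≤ w ⟨k, t⟩ := eventually_all.2 fun t ↦
      eventually_nhdsWithin_of_eventually_nhds (eventually_le_nhds (w_pos ⟨k, t⟩))
    exact (eventually_mem_nhdsWithin.and eventually_le_w).exists
  choose a a_pos a_le_w using exists_pos_le_w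
  choose! k one_div_k_lt using fun (ε : ℝ) (hε : 0 < ε) ↦ exists_nat_one_div_lt (half_pos hε)
  refine ⟨fun ε ↦ a (k ε), fun ε ↦ a_pos (k ε), fun μ hμ ↦ ?_⟩
  obtain ⟨s, hsK, w_le⟩ := exists_mem_forall_mem_imp_le_outerMeasure μ
    (fun i : Σ k, T k ↦ ball (i.2 : S) (1 / ((i.1 : ℝ) + 1))) (fun i ↦ w i) (tsum_w_lt.trans_le hμ)
  refine ⟨s, hsK, fun ε hε ↦ ?_⟩
  obtain ⟨t, ht, hst⟩ := mem_iUnion₂.1 (K_subset (k ε) hsK)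
  calc (a (k ε) : ℝ≥0∞) ≤ w ⟨k ε, t, ht⟩ := by exact_mod_cast a_le_w (k ε) ⟨t, ht⟩
    _ ≤ μ (ball t (1 / ((k ε : ℝ) + 1))) := w_le ⟨k ε, t, ht⟩ hst
    _ ≤ μ (ball s ε) := measure_mono <| ball_subset <| by
      linarith [one_div_k_lt ε hε, mem_ball'.1 hst]

end Pigeonhole

section ForwardCone

variable {V : Type*} [NormedAddCommGroup V] [InnerProductSpace ℝ V]

/-- The one-sided open cone about `x` in direction `s` with opening angle `ε`: the half of the
double cone `cone s ε x` around the ray from `x` in direction `s`. -/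
def forwardCone (s : V) (ε : ℝ) (x : V) : Set V :=
  {y | y ≠ x ∧ angle (y - x) s < ε}

theorem forwardCone_subset_cone {n : ℕ} (s : EuclideanSpace ℝ (Fin n)) (ε : ℝ)
    (x : EuclideanSpace ℝ (Fin n)) : forwardCone s ε x ⊆ cone s ε x :=
  fun _ hy ↦ ⟨hy.1, min_lt_of_left_lt hy.2⟩

theorem angle_eq_arccos_one_sub_dist_sq {u v : V} (hu : ‖u‖ = 1) (hv : ‖v‖ = 1) :
    angle u v = Real.arccos (1 - dist u v ^ 2 / 2) := by
  have inner_eq : inner ℝ u v = 1 - dist u v ^ 2 / 2 := by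
    rw [dist_eq_norm, norm_sub_sq_real, hu, hv]
    ring
  rw [angle, hu, hv, inner_eq, mul_one, div_one]

theorem exists_pos_forall_dist_lt_imp_angle_lt {ε : ℝ} (hε : 0 < ε) :
    ∃ δ > 0, ∀ u v : V, ‖u‖ = 1 → ‖v‖ = 1 → dist u v < δ → angle u v < ε := by
  have arccos_tendsto : Tendsto (fun d : ℝ ↦ Real.arccos (1 - d ^ 2 / 2)) (𝓝 0) (𝓝 0) :=
    Continuous.tendsto' (by fun_prop) _ _ (by simp)
  obtain ⟨δ, δ_pos, hδ⟩ := eventually_nhds_iff_ball.1 (arccos_tendsto.eventually_lt_const hε)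
  refine ⟨δ, δ_pos, fun u v hu hv huv ↦ ?_⟩
  rw [angle_eq_arccos_one_sub_dist_sq hu hv]
  exact hδ _ (by simpa using huv)

theorem exists_pos_forall_exists_le_outerMeasure_forwardCone [FiniteDimensional ℝ V] {m : ℝ≥0∞}
    (hm : m ≠ 0) :
    ∃ c : ℝ → ℝ≥0, (∀ ε, 0 < c ε) ∧ ∀ (μ : OuterMeasure V) (x : V), m ≤ μ {x}ᶜ →
      ∃ s : V, ‖s‖ = 1 ∧ ∀ ε > 0, c ε ≤ μ (forwardCone s ε x) := by
  obtain ⟨c, c_pos, hc⟩ := exists_pos_forall_exists_mem_le_outerMeasure_ball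
    (isCompact_sphere (0 : V) 1).totallyBounded hm
  choose! δ δ_pos angle_lt using fun (ε : ℝ) (hε : 0 < ε) ↦
    exists_pos_forall_dist_lt_imp_angle_lt (V := V) hε
  refine ⟨fun ε ↦ c (δ ε), fun ε ↦ c_pos (δ ε), fun μ x hμ ↦ ?_⟩
  let direction (y : V) : V := normalize (y - x)
  have norm_direction {y : V} (hy : y ≠ x) : ‖direction y‖ = 1 :=
    norm_normalize_eq_one_iff.2 (sub_ne_zero.2 hy)
  have le_map_sphere :
      m ≤ OuterMeasure.map direction (OuterMeasure.restrict {x}ᶜ μ) (sphere 0 1) := by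
    rw [OuterMeasure.map_apply, OuterMeasure.restrict_apply, inter_eq_right.2]
    · exact hμ
    · exact fun y hy ↦ mem_sphere_zero_iff_norm.2 (norm_direction hy)
  obtain ⟨s, hs, c_le⟩ := hc _ le_map_sphere
  refine ⟨s, mem_sphere_zero_iff_norm.1 hs, fun ε hε ↦ (c_le (δ ε) (δ_pos ε hε)).trans ?_⟩
  rw [OuterMeasure.map_apply, OuterMeasure.restrict_apply]
  refine measure_mono fun y ⟨hys, hyx⟩ ↦ ⟨hyx, ?_⟩
  rw [← angle_normalize_left]
  exact angle_lt ε hε _ _ (norm_direction hyx) (mem_sphere_zero_iff_norm.1 hs) hys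

end ForwardCone

theorem uniform_cone_estimate_of_positive_lower_density_general {V : Type*} [NormedAddCommGroup V]
    [InnerProductSpace ℝ V] [FiniteDimensional ℝ V] (μ : OuterMeasure V) (X : Set V) (α : ℝ) (x : V)
    (hx : μ {x} = 0)
    (hd : 0 < liminf (fun r : ℝ ↦ μ (X ∩ closedBall x r) / ENNReal.ofReal (2 * r) ^ α) (𝓝[>] 0)) :
    ∃ ρ > (0 : ℝ), ∃ s : ℝ → V, (∀ r ∈ Ioo (0 : ℝ) ρ, ‖s r‖ = 1) ∧
      ∀ ε > (0 : ℝ), ∃ c > (0 : ℝ), ∀ r ∈ Ioo (0 : ℝ) ρ,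
        ENNReal.ofReal (c * r ^ α) ≤ μ (X ∩ closedBall x r ∩ forwardCone (s r) ε x) := by
  obtain ⟨m, m_pos, m_lt⟩ := exists_between hd
  obtain ⟨ρ, ρ_pos, m_lt_density⟩ :=
    mem_nhdsGT_iff_exists_Ioo_subset.1 (eventually_lt_of_lt_liminf m_lt)
  obtain ⟨c, c_pos, hc⟩ := exists_pos_forall_exists_le_outerMeasure_forwardCone (V := V) m_pos.ne'
  let ν (r : ℝ) : OuterMeasure V :=
    (ENNReal.ofReal (2 * r) ^ α)⁻¹ • OuterMeasure.restrict (X ∩ closedBall x r) μ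
  have ν_apply (r : ℝ) (A : Set V) :
      ν r A = μ (X ∩ closedBall x r ∩ A) / ENNReal.ofReal (2 * r) ^ α := by
    simp only [ν, smul_apply, OuterMeasure.restrict_apply, smul_eq_mul, ENNReal.div_eq_inv_mul,
      inter_comm A]
  have m_le_ν (r : ℝ) (hr : r ∈ Ioo 0 ρ) : m ≤ ν r {x}ᶜ := by
    rw [ν_apply, ← sdiff_eq, measure_sdiff_null hx]
    exact (m_lt_density hr).le
  choose! s norm_s c_le using fun r hr ↦ hc (ν r) x (m_le_ν r hr)
  refine ⟨ρ, ρ_pos, s, norm_s, fun ε hε ↦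
    ⟨c ε * 2 ^ α, mul_pos (c_pos ε) (by positivity), fun r hr ↦ ?_⟩⟩
  have r_pos : 0 < r := hr.1
  calc ENNReal.ofReal (c ε * 2 ^ α * r ^ α) = c ε * ENNReal.ofReal (2 * r) ^ α := by
        rw [mul_assoc, ← Real.mul_rpow zero_le_two r_pos.le, ENNReal.ofReal_mul (c ε).coe_nonneg,
          ENNReal.ofReal_coe_nnreal, ENNReal.ofReal_rpow_of_pos (by positivity)]
    _ ≤ μ (X ∩ closedBall x r ∩ forwardCone (s r) ε x) :=
      ENNReal.mul_le_of_le_div <| (c_le r hr ε hε).trans_eq (ν_apply r _)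

theorem uniform_cone_estimate_of_positive_lower_density (n : ℕ)
    (X : Set (EuclideanSpace ℝ (Fin n))) (α : ℝ) (hα : 0 < α)
    (x : EuclideanSpace ℝ (Fin n)) (hd : 0 < lowerDensity α X x) :
    ∃ ρ > (0 : ℝ), ∃ s : ℝ → EuclideanSpace ℝ (Fin n),
      (∀ r ∈ Set.Ioo (0 : ℝ) ρ, ‖s r‖ = 1) ∧
      ∀ ε > (0 : ℝ), ∃ c > (0 : ℝ), ∀ r ∈ Set.Ioo (0 : ℝ) ρ,
        ENNReal.ofReal (c * r ^ α) ≤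
          μH[α] (X ∩ Metric.closedBall x r ∩ cone (s r) ε x) := by
  have := Measure.nullSingletonClass_hausdorff (EuclideanSpace ℝ (Fin n)) hα
  obtain ⟨ρ, ρ_pos, s, norm_s, estimate⟩ := uniform_cone_estimate_of_positive_lower_density_general
    μH[α].toOuterMeasure X α x (measure_singleton x) hd
  exact ⟨ρ, ρ_pos, s, norm_s, fun ε hε ↦
    let ⟨c, c_pos, hc⟩ := estimate ε hε
    ⟨c, c_pos, fun r hr ↦ (hc r hr).trans <|
      measure_mono <| inter_subset_inter_right _ <| forwardCone_subset_cone (s r) ε x⟩⟩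

end
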